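/- arXiv:2304.01509 — 2 statements merged into one kernel-verified Lean document; each statement's English description precedes it below -/
import Mathlib

section
/- Let $R_d > 0$ and $0 < R_g < x_Q < 2 R_d$. Then $\int_{R_g}^{x_Q} \frac{2r}{x_Q^2 - R_g^2}\left[2\pi R_d^2 - 2 R_d^2 \arccos\left(\frac{r}{2R_d}\right) + r\sqrt{R_d^2 - \frac{r^2}{4}}\right] dr = F_1(x_Q)$, where $F_1(x_Q) = \frac{1}{4(x_Q^2 - R_g^2)}\Big\{ x_Q\sqrt{4R_d^2 - x_Q^2}\,(2R_d^2 + x_Q^2) + 8\pi R_d^2 x_Q^2 + 8R_d^2\left[R_g^2 \arccos\left(\frac{R_g}{2R_d}\right) - x_Q^2 \arccos\left(\frac{x_Q}{2R_d}\right)\right] + 8R_d^4\left[2\arcsin\left(\frac{R_g}{2R_d}\right) + \arctan\left(\frac{x_Q}{\sqrt{4R_d^2 - x_Q^2}}\right) - \arctan\left(\frac{R_g}{\sqrt{4R_d^2 - R_g^2}}\right) - 2\arcsin\left(\frac{x_Q}{2R_d}\right)\right] - R_g\sqrt{4R_d^2 - R_g^2}\,(2R_d^2 + R_g^2) - 8\pi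 R_d^2 R_g^2 \Big\}$. (Here $\operatorname{arccot}(z)$ for $z > 0$ has been written as $\arctan(1/z)$.) -/
open MeasureTheory intervalIntegral Real

lemma aux_sqrt_one (Rd r : ℝ) (hRd : 0 < Rd) :
    Real.sqrt (1 - (r / (2 * Rd)) ^ 2) = Real.sqrt (4 * Rd ^ 2 - r ^ 2) / (2 * Rd) := by
  have h : 1 - (r / (2 * Rd)) ^ 2 = (4 * Rd ^ 2 - r ^ 2) / (2 * Rd) ^ 2 := by
    field_simp
    ring
  rw [h, Real.sqrt_div' _ (by positivity), Real.sqrt_sq (by positivity)]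

lemma aux_sqrt_four (Rd r : ℝ) :
    Real.sqrt (Rd ^ 2 - r ^ 2 / 4) = Real.sqrt (4 * Rd ^ 2 - r ^ 2) / 2 := by
  have h : Rd ^ 2 - r ^ 2 / 4 = (4 * Rd ^ 2 - r ^ 2) / 2 ^ 2 := by ring
  rw [h, Real.sqrt_div' _ (by positivity), Real.sqrt_sq (by positivity)]

lemma aux_arctan (Rd r : ℝ) (hRd : 0 < Rd) (h0 : 0 < r) (h1 : r < 2 * Rd) :
    Real.arctan (r / Real.sqrt (4 * Rd ^ 2 - r ^ 2)) = Real.arcsin (r / (2 * Rd)) := by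
  have hlt : r / (2 * Rd) < 1 := (div_lt_one (by positivity)).2 h1
  have hpos : 0 < r / (2 * Rd) := by positivity
  rw [Real.arcsin_eq_arctan ⟨by linarith, hlt⟩, aux_sqrt_one Rd r hRd]
  congr 1
  rw [div_div_div_cancel_right₀ (by positivity)]

lemma aux_deriv (Rd r : ℝ) (hRd : 0 < Rd) (h0 : 0 < r) (h1 : r < 2 * Rd) :
    HasDerivAt (fun r : ℝ => r * Real.sqrt (4 * Rd ^ 2 - r ^ 2) * (2 * Rd ^ 2 + r ^ 2)
      + 8 * Real.pi * Rd ^ 2 * r ^ 2 - 8 * Rd ^ 2 * (r ^ 2 * Real.arccos (r / (2 * Rd)))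
      - 8 * Rd ^ 4 * Real.arcsin (r / (2 * Rd)))
      (8 * r * (2 * Real.pi * Rd ^ 2 - 2 * Rd ^ 2 * Real.arccos (r / (2 * Rd)) +
            r * Real.sqrt (Rd ^ 2 - r ^ 2 / 4))) r := by
  have hlt : r / (2 * Rd) < 1 := (div_lt_one (by positivity)).2 h1
  have hpos : 0 < r / (2 * Rd) := by positivity
  have hq : 0 < 4 * Rd ^ 2 - r ^ 2 := by nlinarith
  have hs : 0 < Real.sqrt (4 * Rd ^ 2 - r ^ 2) := Real.sqrt_pos.2 hq
  have hss := Real.sq_sqrt hq.le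
  have hid := hasDerivAt_id' r
  have hp : HasDerivAt (fun r : ℝ => r ^ 2) (2 * r) r := by simpa using hasDerivAt_pow 2 r
  have hd : HasDerivAt (fun r : ℝ => r / (2 * Rd)) (1 / (2 * Rd)) r := hid.div_const _
  have hsq := (hp.const_sub (4 * Rd ^ 2)).sqrt hq.ne'
  have hac := (Real.hasDerivAt_arccos (x := r / (2 * Rd)) (by linarith) hlt.ne).comp r hd
  have has := (Real.hasDerivAt_arcsin (x := r / (2 * Rd)) (by linarith) hlt.ne).comp r hd
  have key := ((((hid.mul hsq).mul (hp.const_add (2 * Rd ^ 2))).add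
    (hp.const_mul (8 * Real.pi * Rd ^ 2))).sub ((hp.mul hac).const_mul (8 * Rd ^ 2))).sub
    (has.const_mul (8 * Rd ^ 4))
  refine key.congr_deriv ?_
  simp only [Function.comp, Pi.mul_apply]
  rw [aux_sqrt_one Rd r hRd, aux_sqrt_four]
  generalize Real.sqrt (4 * Rd ^ 2 - r ^ 2) = s at *
  generalize Real.arccos (r / (2 * Rd)) = a at *
  have hr : r ^ 2 = 4 * Rd ^ 2 - s ^ 2 := by linarith
  field_simp
  linear_combination (4 * Rd ^ 2 - 2 * r ^ 2) * hss

/-- For `Rg < xQ < 2 R_d`, the expected union sensing area of an S-C pair equals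
`F₁(xQ)` as given in the paper (with `arccot z` written as `arctan (1/z)`). -/
theorem expected_union_area_F1 (Rd Rg xQ : ℝ) (hRd : 0 < Rd) (hRg : 0 < Rg)
    (hlt : Rg < xQ) (hxQ : xQ < 2 * Rd) :
    ∫ r in Rg..xQ,
        (2 * r / (xQ ^ 2 - Rg ^ 2)) *
          (2 * Real.pi * Rd ^ 2 - 2 * Rd ^ 2 * Real.arccos (r / (2 * Rd)) +
            r * Real.sqrt (Rd ^ 2 - r ^ 2 / 4))
      = (1 / (4 * (xQ ^ 2 - Rg ^ 2))) *
          (xQ * Real.sqrt (4 * Rd ^ 2 - xQ ^ 2) * (2 * Rd ^ 2 + xQ ^ 2)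
            + 8 * Real.pi * Rd ^ 2 * xQ ^ 2
            + 8 * Rd ^ 2 *
                (Rg ^ 2 * Real.arccos (Rg / (2 * Rd))
                  - xQ ^ 2 * Real.arccos (xQ / (2 * Rd)))
            + 8 * Rd ^ 4 *
                (2 * Real.arcsin (Rg / (2 * Rd))
                  + Real.arctan (xQ / Real.sqrt (4 * Rd ^ 2 - xQ ^ 2))
                  - Real.arctan (Rg / Real.sqrt (4 * Rd ^ 2 - Rg ^ 2))
                  - 2 * Real.arcsin (xQ / (2 * Rd)))
            - Rg * Real.sqrt (4 * Rd ^ 2 - Rg ^ 2) * (2 * Rd ^ 2 + Rg ^ 2)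
            - 8 * Real.pi * Rd ^ 2 * Rg ^ 2) := by
  have hpos : 0 < xQ ^ 2 - Rg ^ 2 := by nlinarith
  have hmem : ∀ r ∈ Set.uIcc Rg xQ, 0 < r ∧ r < 2 * Rd := by
    intro r hr
    rw [Set.uIcc_of_le hlt.le] at hr
    exact ⟨by linarith [hr.1], by linarith [hr.2]⟩
  have hI := intervalIntegral.integral_eq_sub_of_hasDerivAt
    (fun r hr => aux_deriv Rd r hRd (hmem r hr).1 (hmem r hr).2)
    (Continuous.intervalIntegrable (by
      have := Real.continuous_arccos
      fun_prop) Rg xQ)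
  have hfun : ∀ r : ℝ, (2 * r / (xQ ^ 2 - Rg ^ 2)) *
          (2 * Real.pi * Rd ^ 2 - 2 * Rd ^ 2 * Real.arccos (r / (2 * Rd)) +
            r * Real.sqrt (Rd ^ 2 - r ^ 2 / 4)) = (1 / (4 * (xQ ^ 2 - Rg ^ 2))) *
          (8 * r * (2 * Real.pi * Rd ^ 2 - 2 * Rd ^ 2 * Real.arccos (r / (2 * Rd)) +
            r * Real.sqrt (Rd ^ 2 - r ^ 2 / 4))) := by
    intro r
    field_simp
    ring
  simp_rw [hfun]
  rw [intervalIntegral.integral_const_mul, hI, aux_arctan Rd xQ hRd (by linarith) hxQ,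
    aux_arctan Rd Rg hRd hRg (by linarith)]
  ring
end

section
/- Let $R_d > 0$ and $0 < R_g < 2 R_d \le x_Q$. Then $\int_{R_g}^{x_Q} \frac{2r}{x_Q^2 - R_g^2}\, S_{u1}(r)\, dr = F_2(x_Q)$, where $S_{u1}(r) = 2\pi R_d^2 - \left[2R_d^2 \arccos\left(\frac{r}{2R_d}\right) - r\sqrt{R_d^2 - \frac{r^2}{4}}\right]$ for $R_g \le r \le 2R_d$, $S_{u1}(r) = 2\pi R_d^2$ for $2R_d < r \le x_Q$, and $F_2(x_Q) = \frac{1}{x_Q^2 - R_g^2}\Big\{ 2\pi R_d^2 (x_Q^2 - R_g^2) + \pi R_d^4 - 2 R_d^4 \arctan\left(\frac{R_g}{\sqrt{4R_d^2 - R_g^2}}\right) - 2 R_d^2 \arccos\left(\frac{R_g}{2R_d}\right)(2R_d^2 - R_g^2) - \frac{1}{4} R_g \sqrt{4R_d^2 - R_g^2}\,(2R_d^2 + R_g^2)\Big\}$. (Here $\operatorname{arccot}(z)$ for $z > 0$ has been written as $\arctan(1/z)$.) -/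
open MeasureTheory intervalIntegral Real

lemma aux_part1 (Rd Rg : ℝ) (hRd : 0 < Rd) (hRg : 0 < Rg) (hlt : Rg < 2 * Rd) :
    ∫ r in Rg..(2 * Rd), 2 * r * (2 * Real.pi * Rd ^ 2 -
                (2 * Rd ^ 2 * Real.arccos (r / (2 * Rd)) -
                  r * (Rd * Real.sqrt (1 - (r / (2 * Rd)) ^ 2)))) =
      9 * Real.pi * Rd ^ 4 - (2 * Real.pi * Rd ^ 2 * Rg ^ 2
        + 2 * Rd ^ 4 * Real.arcsin (Rg / (2 * Rd))
        + 2 * Rd ^ 2 * Real.arccos (Rg / (2 * Rd)) * (2 * Rd ^ 2 - Rg ^ 2)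
        + (1 / 2) * Rg * (Rd * Real.sqrt (1 - (Rg / (2 * Rd)) ^ 2)) * (2 * Rd ^ 2 + Rg ^ 2)) := by
  have h := intervalIntegral.integral_eq_sub_of_hasDerivAt_of_le (a := Rg) (b := 2 * Rd)
    (f := fun r => 2 * Real.pi * Rd ^ 2 * r ^ 2
        + 2 * Rd ^ 4 * Real.arcsin (r / (2 * Rd))
        + 2 * Rd ^ 2 * Real.arccos (r / (2 * Rd)) * (2 * Rd ^ 2 - r ^ 2)
        + (1 / 2) * r * (Rd * Real.sqrt (1 - (r / (2 * Rd)) ^ 2)) * (2 * Rd ^ 2 + r ^ 2))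
    (f' := fun r => 2 * r * (2 * Real.pi * Rd ^ 2 -
                (2 * Rd ^ 2 * Real.arccos (r / (2 * Rd)) -
                  r * (Rd * Real.sqrt (1 - (r / (2 * Rd)) ^ 2))))) hlt.le ?_ ?_ ?_
  · rw [h]
    have : (2 * Rd) / (2 * Rd) = 1 := by field_simp
    simp only [this, Real.arcsin_one, Real.arccos_one]
    norm_num
    ring
  · apply Continuous.continuousOn
    have := Real.continuous_arcsin
    have := Real.continuous_arccos
    fun_prop
  · intro r hr
    have hu1 : r / (2 * Rd) < 1 := by rw [div_lt_one (by positivity)]; exact hr.2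
    have hr0 : 0 < r := hRg.trans hr.1
    have hu0 : 0 < r / (2 * Rd) := by positivity
    have hpos : 0 < 1 - (r / (2 * Rd)) ^ 2 := by nlinarith
    have hd : HasDerivAt (fun r : ℝ => r / (2 * Rd)) (1 / (2 * Rd)) r :=
      (hasDerivAt_id r).div_const _
    have hs := (Real.hasDerivAt_arcsin (by linarith : r / (2 * Rd) ≠ -1) hu1.ne).comp r hd
    have hc := (Real.hasDerivAt_arccos (by linarith : r / (2 * Rd) ≠ -1) hu1.ne).comp r hd
    have hq := ((hd.pow 2).const_sub 1).sqrt hpos.ne'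
    have hp := (hasDerivAt_id r).pow 2
    have := (((hp.const_mul (2 * Real.pi * Rd ^ 2)).add (hs.const_mul (2 * Rd ^ 4))).add
      ((hc.const_mul (2 * Rd ^ 2)).mul (hp.const_sub (2 * Rd ^ 2)))).add
      ((((hasDerivAt_id r).const_mul (1 / 2)).mul (hq.const_mul Rd)).mul
        (hp.const_add (2 * Rd ^ 2)))
    refine this.congr_deriv ?_
    simp only [Function.comp, id, Pi.pow_apply, Pi.mul_apply]
    have hw := Real.sq_sqrt hpos.le
    have hw0 := Real.sqrt_pos.2 hpos
    set w := Real.sqrt (1 - (r / (2 * Rd)) ^ 2) with hwdef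
    clear_value w
    obtain ⟨u, hu⟩ : ∃ u, u = r / (2 * Rd) := ⟨_, rfl⟩
    have hru : r = 2 * Rd * u := by rw [hu]; field_simp
    rw [← hu] at hw ⊢
    subst hru
    have hw2 : u ^ 2 = 1 - w ^ 2 := by linarith
    generalize Real.arccos u = A
    clear hu hwdef
    field_simp
    ring_nf
    simp only [hw]
    ring
  · apply Continuous.intervalIntegrable
    have := Real.continuous_arccos
    fun_prop

/-- For `Rg < 2 R_d ≤ xQ`, the expected union sensing area of an S-C pair equals
`F₂(xQ)` as given in the paper (with `arccot z` written as `arctan (1/z)`). -/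
theorem expected_union_area_F2 (Rd Rg xQ : ℝ) (hRd : 0 < Rd) (hRg : 0 < Rg)
    (hlt : Rg < 2 * Rd) (hxQ : 2 * Rd ≤ xQ) :
    ∫ r in Rg..xQ,
        (2 * r / (xQ ^ 2 - Rg ^ 2)) *
          (if r ≤ 2 * Rd then
              2 * Real.pi * Rd ^ 2 -
                (2 * Rd ^ 2 * Real.arccos (r / (2 * Rd)) -
                  r * Real.sqrt (Rd ^ 2 - r ^ 2 / 4))
            else 2 * Real.pi * Rd ^ 2)
      = (1 / (xQ ^ 2 - Rg ^ 2)) *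
          (2 * Real.pi * Rd ^ 2 * (xQ ^ 2 - Rg ^ 2) + Real.pi * Rd ^ 4
            - 2 * Rd ^ 4 * Real.arctan (Rg / Real.sqrt (4 * Rd ^ 2 - Rg ^ 2))
            - 2 * Rd ^ 2 * Real.arccos (Rg / (2 * Rd)) * (2 * Rd ^ 2 - Rg ^ 2)
            - (1 / 4) * Rg * Real.sqrt (4 * Rd ^ 2 - Rg ^ 2) * (2 * Rd ^ 2 + Rg ^ 2)) := by
  have hD : 0 < xQ ^ 2 - Rg ^ 2 := by nlinarith
  have hsq : ∀ r : ℝ, Real.sqrt (Rd ^ 2 - r ^ 2 / 4) = Rd * Real.sqrt (1 - (r / (2 * Rd)) ^ 2) := by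
    intro r
    rw [show Rd ^ 2 - r ^ 2 / 4 = Rd ^ 2 * (1 - (r / (2 * Rd)) ^ 2) by field_simp; ring,
      Real.sqrt_mul (by positivity), Real.sqrt_sq hRd.le]
  have hsq2 : Real.sqrt (4 * Rd ^ 2 - Rg ^ 2) =
      2 * Rd * Real.sqrt (1 - (Rg / (2 * Rd)) ^ 2) := by
    rw [show 4 * Rd ^ 2 - Rg ^ 2 = (2 * Rd) ^ 2 * (1 - (Rg / (2 * Rd)) ^ 2) by field_simp; ring,
      Real.sqrt_mul (by positivity), Real.sqrt_sq (by positivity)]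
  have hat : Real.arctan (Rg / Real.sqrt (4 * Rd ^ 2 - Rg ^ 2)) = Real.arcsin (Rg / (2 * Rd)) := by
    rw [Real.arcsin_eq_arctan, hsq2, div_div]
    refine ⟨?_, ?_⟩
    · have : 0 < Rg / (2 * Rd) := by positivity
      linarith
    · rw [div_lt_one (by positivity)]; exact hlt
  rw [hat, hsq2]
  have hfac : ∀ r c : ℝ, 2 * r / (xQ ^ 2 - Rg ^ 2) * c = 1 / (xQ ^ 2 - Rg ^ 2) * (2 * r * c) := by
    intro r c; ring
  simp only [hfac, hsq]
  rw [intervalIntegral.integral_const_mul]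
  congr 1
  have e1 : Set.EqOn (fun r => 2 * r * (2 * Real.pi * Rd ^ 2 -
                (2 * Rd ^ 2 * Real.arccos (r / (2 * Rd)) -
                  r * (Rd * Real.sqrt (1 - (r / (2 * Rd)) ^ 2)))))
      (fun r => 2 * r * (if r ≤ 2 * Rd then 2 * Real.pi * Rd ^ 2 -
                (2 * Rd ^ 2 * Real.arccos (r / (2 * Rd)) -
                  r * (Rd * Real.sqrt (1 - (r / (2 * Rd)) ^ 2))) else 2 * Real.pi * Rd ^ 2))
      (Set.uIoc Rg (2 * Rd)) := by
    intro r hr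
    rw [Set.uIoc_of_le hlt.le] at hr
    simp only [if_pos hr.2]
  have e2 : Set.EqOn (fun r => 2 * r * (2 * Real.pi * Rd ^ 2))
      (fun r => 2 * r * (if r ≤ 2 * Rd then 2 * Real.pi * Rd ^ 2 -
                (2 * Rd ^ 2 * Real.arccos (r / (2 * Rd)) -
                  r * (Rd * Real.sqrt (1 - (r / (2 * Rd)) ^ 2))) else 2 * Real.pi * Rd ^ 2))
      (Set.uIoc (2 * Rd) xQ) := by
    intro r hr
    rw [Set.uIoc_of_le hxQ] at hr
    simp only [if_neg (not_le.2 hr.1)]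
  have hc := Real.continuous_arccos
  rw [← intervalIntegral.integral_add_adjacent_intervals (b := 2 * Rd)
    (IntervalIntegrable.congr e1 (Continuous.intervalIntegrable (by fun_prop) _ _))
    (IntervalIntegrable.congr e2 (Continuous.intervalIntegrable (by fun_prop) _ _)),
    ← intervalIntegral.integral_congr_ae (Filter.Eventually.of_forall e1), ← intervalIntegral.integral_congr_ae (Filter.Eventually.of_forall e2),
    aux_part1 Rd Rg hRd hRg hlt, intervalIntegral.integral_mul_const,
    intervalIntegral.integral_const_mul, integral_id]
  ring
end
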